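/- Let a > 0 be a real number and let P ⊂ ℝ^n be an n-dimensional lattice polytope such that all n complex roots of its Ehrhart polynomial L_P have real part equal to -1/a. Then vol(P) ≤ (a/(a+1))^n · #(P ∩ ℤ^n), and equality holds if and only if L_P(k) = (ak+1)^n for all positive integers k. -/

import Mathlib

/-!
The volume of `P` is the leading coefficient `c` of `L`, and `P` contains
`L 1 = c * ∏ (1 - z)` lattice points, the product running over the roots `z` of `L`. If `z` has
real part at most `-1 / a`, then `‖1 - z‖ ≥ 1 + 1 / a`, with equality only for `z = -1 / a`. This
gives the inequality, and in the equality case `L` is a constant multiple of `(a * X + 1) ^ n`.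

That constant is `1` because `L 0 = 1`, although `L` is only prescribed at positive arguments. Let
`u i` be the `N` vertices of `P`. For `t ≥ N`, nonnegative weights on the `u i` of total mass `t`
and weighted sum `y` form a polytope covered by the half-spaces `{x | 1 ≤ x i}`, and the slice on
which the weights in `I` are at least `1` is nonempty exactly when
`y - ∑ i ∈ I, u i ∈ (t - #I) • P`. Since the Euler characteristic is a valuation,
inclusion–exclusion gives `∑ (-1) ^ #I = 0` over these `I`. Summing over the lattice points `y`, the
`N`-th difference of `k ↦ #(k • P ∩ ℤ^n)` vanishes, from `k = 0` onwards, so that the polynomial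
formula for the count also holds at `k = 0`.
-/

open MeasureTheory Polynomial Pointwise

/-- The number of integer lattice points contained in a subset of `ℝ^n`. -/
noncomputable def latticePointCount {n : ℕ} (S : Set (Fin n → ℝ)) : ℕ :=
  {v : Fin n → ℤ | (fun i => (v i : ℝ)) ∈ S}.ncard

/-- A lattice polytope in `ℝ^n`: the convex hull of finitely many integer points. -/
def IsLatticePolytope {n : ℕ} (P : Set (Fin n → ℝ)) : Prop :=
  ∃ V : Finset (Fin n → ℤ),
    P = convexHull ℝ ((fun v : Fin n → ℤ => fun i => (v i : ℝ)) '' (V : Set (Fin n → ℤ)))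

/-- `L` is the Ehrhart polynomial of `P`: for every positive integer `k` its value at `k`
is the number of lattice points of the dilate `kP`. -/
def IsEhrhartPoly {n : ℕ} (P : Set (Fin n → ℝ)) (L : Polynomial ℝ) : Prop :=
  ∀ k : ℕ, 0 < k → L.eval (k : ℝ) = latticePointCount ((k : ℝ) • P)

open Filter Finset Topology

section EulerCharacteristic

variable {τ G : Type*} [Fintype τ] [AddCommGroup G] {c : τ → G}

section LinearOrder

variable {α : Type*} [ConditionallyCompleteLinearOrder α] [TopologicalSpace α] [OrderTopology α]

theorem eventually_nhdsGT_mem_iff {J : Set α} (hcl : IsClosed J) (hord : J.OrdConnected) (b : α) :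
    ∀ᶠ t in 𝓝[>] b, (t ∈ J ↔ b ∈ J ∧ ¬IsGreatest J b) := by
  by_cases hb : b ∈ J
  · by_cases hgr : IsGreatest J b
    · filter_upwards [self_mem_nhdsWithin] with t ht
      exact iff_of_false (fun htJ => (hgr.2 htJ).not_gt ht) fun h => h.2 hgr
    · obtain ⟨y, hy, hby⟩ : ∃ y ∈ J, b < y := by
        simpa [IsGreatest, hb, upperBounds] using hgr
      filter_upwards [Ioo_mem_nhdsGT hby] with t ht
      exact iff_of_true (hord.out hb hy ⟨ht.1.le, ht.2.le⟩) ⟨hb, hgr⟩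
  · filter_upwards [nhdsWithin_le_nhds (hcl.isOpen_compl.mem_nhds hb)] with t ht
    exact iff_of_false ht fun h => hb h.1

variable [DenselyOrdered α] [NoMaxOrder α] {J : τ → Set α}

open scoped Classical in
theorem sum_isGreatest_eq_zero (hcl : ∀ i, IsClosed (J i)) (hord : ∀ i, (J i).OrdConnected)
    (h : ∀ t, ∑ i with t ∈ J i, c i = 0) (b : α) : ∑ i with IsGreatest (J i) b, c i = 0 := by
  obtain ⟨t, ht⟩ :=
    (eventually_all.2 fun i => eventually_nhdsGT_mem_iff (hcl i) (hord i) b).exists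
  have hsplit := sum_filter_add_sum_filter_not {i | b ∈ J i} (fun i => IsGreatest (J i) b) c
  have hgreatest : ∀ i, b ∈ J i ∧ IsGreatest (J i) b ↔ IsGreatest (J i) b :=
    fun i => and_iff_right_of_imp And.left
  simpa only [filter_filter, ← ht, h, hgreatest, add_zero] using hsplit

open scoped Classical in
theorem sum_nonempty_eq_zero_of_ordConnected (hc : ∀ i, IsCompact (J i))
    (hord : ∀ i, (J i).OrdConnected) (h : ∀ t, ∑ i with t ∈ J i, c i = 0) :
    ∑ i with (J i).Nonempty, c i = 0 := by
  rw [← sum_fiberwise_of_maps_to (t := univ.image fun i => sSup (J i))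
    (g := fun i => sSup (J i)) fun i _ => mem_image_of_mem _ (mem_univ i)]
  refine sum_eq_zero fun b _ => ?_
  rw [filter_filter, ← sum_isGreatest_eq_zero (fun i => (hc i).isClosed) hord h b]
  refine sum_congr (filter_congr fun i _ => ⟨?_, fun hb => ⟨hb.nonempty, hb.csSup_eq⟩⟩)
    fun _ _ => rfl
  rintro ⟨hne, rfl⟩
  exact (hc i).isGreatest_sSup hne

end LinearOrder

variable {E : Type*} [AddCommGroup E] [Module ℝ E] [TopologicalSpace E] {K : τ → Set E}

open scoped Classical in
theorem sum_nonempty_eq_zero_of_preimage_singleton (hc : ∀ i, IsCompact (K i))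
    (hv : ∀ i, Convex ℝ (K i)) (φ : E →L[ℝ] ℝ)
    (h : ∀ t, ∑ i with (K i ∩ φ ⁻¹' {t}).Nonempty, c i = 0) :
    ∑ i with (K i).Nonempty, c i = 0 := by
  have himage := sum_nonempty_eq_zero_of_ordConnected (c := c) (J := fun i => φ '' K i)
    (fun i => (hc i).image φ.continuous)
    (fun i => ((hv i).linear_image φ.toLinearMap).ordConnected) fun t => h t
  simpa only [Set.image_nonempty] using himage

open scoped Classical in
theorem sum_nonempty_eq_zero_of_forall_eq {ι : Type*} (φ : ι → E →L[ℝ] ℝ) (s : Finset ι)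
    (hc : ∀ i, IsCompact (K i)) (hv : ∀ i, Convex ℝ (K i))
    (h : ∀ x, ∑ i with (K i ∩ {y | ∀ j ∈ s, φ j y = φ j x}).Nonempty, c i = 0) :
    ∑ i with (K i).Nonempty, c i = 0 := by
  induction s using Finset.induction_on generalizing K with
  | empty => simpa using h 0
  | insert j s _ ih =>
    refine sum_nonempty_eq_zero_of_preimage_singleton hc hv (φ j) fun t => ?_
    refine ih (fun i => (hc i).inter_right (isClosed_singleton.preimage (φ j).continuous))
      (fun i => (hv i).inter ((convex_singleton t).linear_preimage (φ j).toLinearMap)) fun x => ?_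
    by_cases hx : ∃ z, φ j z = t ∧ ∀ k ∈ s, φ k z = φ k x
    · obtain ⟨z, rfl, hz⟩ := hx
      have hfiber : φ j ⁻¹' {φ j z} ∩ {y | ∀ k ∈ s, φ k y = φ k x} =
          {y | ∀ k ∈ insert j s, φ k y = φ k z} := by
        ext y
        simp +contextual [← hz]
      simpa only [Set.inter_assoc, hfiber] using h z
    · refine sum_eq_zero fun i hi => (hx ?_).elim
      obtain ⟨z, ⟨-, hzt⟩, hzs⟩ := (mem_filter.1 hi).2
      exact ⟨z, hzt, hzs⟩

variable [IsTopologicalAddGroup E] [ContinuousSMul ℝ E] [T2Space E] [FiniteDimensional ℝ E]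

/- The Euler characteristic, which is `1` on nonempty compact convex sets, is a valuation. -/
open scoped Classical in
theorem sum_nonempty_eq_zero (hc : ∀ i, IsCompact (K i)) (hv : ∀ i, Convex ℝ (K i))
    (h : ∀ x, ∑ i with x ∈ K i, c i = 0) : ∑ i with (K i).Nonempty, c i = 0 := by
  let b := Module.finBasis ℝ E
  refine sum_nonempty_eq_zero_of_forall_eq (fun j => LinearMap.toContinuousLinearMap (b.coord j))
    univ hc hv fun x => ?_
  have hfiber : {y | ∀ j, b.repr y j = b.repr x j} = {x} := by
    ext y
    simp [b.ext_elem_iff]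
  simpa [hfiber] using h x

open scoped Classical in
theorem sum_neg_one_pow_card_inter_nonempty_eq_zero {ι : Type*} [Fintype ι] {K : Set E}
    {C : ι → Set E} (hK : IsCompact K) (hKv : Convex ℝ K) (hC : ∀ i, IsClosed (C i))
    (hCv : ∀ i, Convex ℝ (C i)) (hcover : K ⊆ ⋃ i, C i) :
    ∑ I : Finset ι with (K ∩ ⋂ i ∈ I, C i).Nonempty, (-1 : ℤ) ^ #I = 0 := by
  refine sum_nonempty_eq_zero
    (fun I => hK.inter_right <| isClosed_biInter fun i _ => hC i)
    (fun I => hKv.inter <| convex_iInter₂ fun i _ => hCv i) fun x => ?_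
  by_cases hx : x ∈ K
  · obtain ⟨i, hi⟩ := Set.mem_iUnion.1 (hcover hx)
    have hpowerset := sum_powerset_neg_one_pow_card_of_nonempty (x := {i | x ∈ C i})
      ⟨i, by simpa using hi⟩
    refine Eq.trans (sum_congr ?_ fun _ _ => rfl) hpowerset
    ext I
    simp [hx, subset_iff]
  · simp [hx]

end EulerCharacteristic

section WeightPolytope

variable {ι E : Type*} [Fintype ι] [AddCommGroup E] [Module ℝ E]

/-- The polytope of all nonnegative weights of total mass `t` on the points `u i` for which the
weighted sum of these points is `y`. -/
def weightPolytope (u : ι → E) (t : ℝ) (y : E) : Set (ι → ℝ) :=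
  {x | (∀ i, 0 ≤ x i) ∧ ∑ i, x i = t ∧ ∑ i, x i • u i = y}

variable (u : ι → E) (t : ℝ) (y : E)

theorem isClosed_preimage_singleton_of_finiteDimensional {V : Type*} [AddCommGroup V] [Module ℝ V]
    [TopologicalSpace V] [IsTopologicalAddGroup V] [ContinuousSMul ℝ V] [T2Space V]
    [FiniteDimensional ℝ V] (T : V →ₗ[ℝ] E) : IsClosed (T ⁻¹' {y}) := by
  obtain hempty | ⟨x, rfl⟩ := (T ⁻¹' {y}).eq_empty_or_nonempty
  · simp [hempty]
  · have hker : T ⁻¹' {T x} = (· - x) ⁻¹' (LinearMap.ker T : Set V) := by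
      ext z
      simp [sub_eq_zero]
    rw [hker]
    exact (LinearMap.ker T).closed_of_finiteDimensional.preimage (by fun_prop)

theorem weightPolytope_eq : weightPolytope u t y =
    Set.Ici 0 ∩ Fintype.linearCombination ℝ (fun i => ((1 : ℝ), u i)) ⁻¹' {(t, y)} := by
  ext x
  simp [weightPolytope, Pi.le_def, Fintype.linearCombination_apply, Prod.ext_iff, Prod.fst_sum,
    Prod.snd_sum]

theorem isCompact_weightPolytope : IsCompact (weightPolytope u t y) := by
  refine (isCompact_Icc (a := (0 : ι → ℝ)) (b := fun _ => t)).of_isClosed_subset ?_ ?_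
  · rw [weightPolytope_eq]
    exact isClosed_Ici.inter (isClosed_preimage_singleton_of_finiteDimensional _ _)
  · rintro x ⟨hx, rfl, -⟩
    exact ⟨hx, fun i => single_le_sum (fun j _ => hx j) (mem_univ i)⟩

theorem convex_weightPolytope : Convex ℝ (weightPolytope u t y) := by
  rw [weightPolytope_eq]
  exact (convex_Ici 0).inter ((convex_singleton _).linear_preimage _)

variable {t}

theorem weightPolytope_subset_iUnion [Nonempty ι] (ht : Fintype.card ι ≤ t) :
    weightPolytope u t y ⊆ ⋃ i, {x | 1 ≤ x i} := by
  rintro x ⟨-, rfl, -⟩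
  obtain ⟨i, -, hi⟩ := exists_le_of_sum_le (f := fun _ => (1 : ℝ)) (g := x) univ_nonempty
    (by simpa using ht)
  exact Set.mem_iUnion.2 ⟨i, hi⟩

variable {u y}

theorem sub_indicator_mem_weightPolytope_iff (I : Finset ι) (x : ι → ℝ) :
    x - (I : Set ι).indicator 1 ∈ weightPolytope u (t - #I) (y - ∑ i ∈ I, u i) ↔
      x ∈ weightPolytope u t y ∩ ⋂ i ∈ I, {x | 1 ≤ x i} := by
  classical
  have hsum : ∑ i, (I : Set ι).indicator (1 : ι → ℝ) i = #I := by
    simp [Set.indicator_apply]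
  have hsmul : ∑ i, (I : Set ι).indicator (1 : ι → ℝ) i • u i = ∑ i ∈ I, u i := by
    simp [Set.indicator_apply, ite_smul]
  have hnonneg : (∀ i, 0 ≤ x i - (I : Set ι).indicator 1 i) ↔
      (∀ i, 0 ≤ x i) ∧ ∀ i ∈ I, 1 ≤ x i := by
    refine ⟨fun h => ⟨fun i => ?_, fun i hi => by simpa [hi] using h i⟩, fun h i => ?_⟩
    · exact (Set.indicator_nonneg (fun _ _ => zero_le_one) i).trans (sub_nonneg.1 (h i))
    · by_cases hi : i ∈ I <;> simp [hi, h.1, h.2]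
  simp only [weightPolytope, Set.mem_ofPred_eq, Pi.sub_apply, hnonneg, sum_sub_distrib, hsum,
    sub_left_inj, sub_smul, hsmul, Set.mem_inter_iff, Set.mem_iInter]
  tauto

theorem nonempty_weightPolytope_sub_iff (I : Finset ι) :
    (weightPolytope u (t - #I) (y - ∑ i ∈ I, u i)).Nonempty ↔
      (weightPolytope u t y ∩ ⋂ i ∈ I, {x | 1 ≤ x i}).Nonempty :=
  (Equiv.subRight ((I : Set ι).indicator 1)).surjective.exists.trans
    (exists_congr (sub_indicator_mem_weightPolytope_iff I))

theorem convexHull_range_eq_image_stdSimplex :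
    convexHull ℝ (Set.range u) = Fintype.linearCombination ℝ u '' stdSimplex ℝ ι := by
  classical
  rw [← convexHull_rangle_single_eq_stdSimplex, LinearMap.image_convexHull, ← Set.range_comp]
  congr
  ext i
  simp

theorem mem_smul_convexHull_range_iff [Nonempty ι] (ht : 0 ≤ t) :
    y ∈ t • convexHull ℝ (Set.range u) ↔ (weightPolytope u t y).Nonempty := by
  classical
  rw [convexHull_range_eq_image_stdSimplex, ← image_smul_set]
  constructor
  · rintro ⟨_, ⟨x, ⟨hx, hx1⟩, rfl⟩, rfl⟩
    refine ⟨t • x, fun i => mul_nonneg ht (hx i), ?_, ?_⟩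
    · simp [← mul_sum, hx1]
    · simp [Fintype.linearCombination_apply, mul_smul, smul_sum]
  · rintro ⟨x, hx, rfl, rfl⟩
    rcases ht.eq_or_lt with h0 | hpos
    · have hx0 : x = 0 := by
        ext i
        exact (sum_eq_zero_iff_of_nonneg fun j _ => hx j).1 h0.symm i (mem_univ i)
      obtain ⟨i⟩ := ‹Nonempty ι›
      exact ⟨0, ⟨Pi.single i 1, single_mem_stdSimplex ℝ i, by simp [hx0]⟩, by simp [hx0]⟩
    · refine ⟨x, ⟨(∑ i, x i)⁻¹ • x, ⟨fun i => mul_nonneg (inv_nonneg.2 ht) (hx i), ?_⟩, ?_⟩, ?_⟩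
      · simp [← mul_sum, hpos.ne']
      · simp [smul_smul, hpos.ne']
      · simp [Fintype.linearCombination_apply]

open scoped Classical in
theorem sum_neg_one_pow_card_mem_smul_convexHull_eq_zero [Nonempty ι] (ht : Fintype.card ι ≤ t)
    (y : E) :
    ∑ I : Finset ι with y - ∑ i ∈ I, u i ∈ (t - #I) • convexHull ℝ (Set.range u), (-1 : ℤ) ^ #I =
      0 := by
  have hnonneg (I : Finset ι) : 0 ≤ t - #I :=
    sub_nonneg.2 ((Nat.cast_le.2 (card_le_univ I)).trans ht)
  simp only [mem_smul_convexHull_range_iff (hnonneg _), nonempty_weightPolytope_sub_iff]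
  exact sum_neg_one_pow_card_inter_nonempty_eq_zero (isCompact_weightPolytope u t y)
    (convex_weightPolytope u t y) (fun i => isClosed_le continuous_const (continuous_apply i))
    (fun i => (convex_Ici (1 : ℝ)).linear_preimage (LinearMap.proj (φ := fun _ => ℝ) i))
    (weightPolytope_subset_iUnion u y ht)

end WeightPolytope

section FiniteDifferences

theorem fwdDiff_iter_card_eq_sum_finset (ι : Type*) [Fintype ι] {G : Type*} [AddCommGroup G]
    (f : ℕ → G) (k : ℕ) : (fwdDiff 1)^[Fintype.card ι] f k =
      ∑ I : Finset ι, (-1 : ℤ) ^ #I • f (k + (Fintype.card ι - #I)) := by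
  rw [fwdDiff_iter_eq_sum_shift, ← powerset_univ, sum_powerset_apply_card (α := G)
    fun j => (-1 : ℤ) ^ j • f (k + (Fintype.card ι - j)), card_univ, ← sum_range_reflect]
  refine sum_congr rfl fun j hj => ?_
  replace hj : j ≤ Fintype.card ι := Nat.lt_succ_iff.1 (mem_range.1 hj)
  rw [Nat.add_sub_cancel, Nat.sub_sub_self hj, Nat.choose_symm hj, ← natCast_zsmul, smul_smul,
    mul_comm, smul_eq_mul, mul_one]

theorem eval_zero_eq_of_fwdDiff_iter_eq_zero {R : Type*} [CommRing R] {f : ℕ → R} {N : ℕ}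
    (hf : (fwdDiff 1)^[N] f = 0) {L : R[X]} (hL : ∀ k : ℕ, 0 < k → L.eval (k : R) = f k) :
    L.eval 0 = f 0 := by
  let M := L.natDegree + 1 + N
  let b (k : ℕ) : ℤ := (-1) ^ (M - k) * M.choose k
  have hfM : ∑ k ∈ range (M + 1), b k • f k = 0 := by
    have hzero : (fwdDiff 1)^[M] f = 0 := by
      rw [Function.iterate_add_apply, hf]
      exact Function.iterate_fixed (fwdDiff_const 1 0) _
    simpa [b, fwdDiff_iter_eq_sum_shift] using congrFun hzero 0
  have hLM : ∑ k ∈ range (M + 1), b k • L.eval (k : R) = 0 := by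
    have hzero : (fwdDiff 1)^[M] L.eval = 0 := fwdDiff_iter_eq_zero_of_degree_lt (by omega)
    simpa [b, fwdDiff_iter_eq_sum_shift] using congrFun hzero 0
  have hpos : ∑ k ∈ range M, b (k + 1) • L.eval ((k + 1 : ℕ) : R) =
      ∑ k ∈ range M, b (k + 1) • f (k + 1) :=
    sum_congr rfl fun k _ => by rw [hL _ k.succ_pos]
  rw [sum_range_succ', hpos] at hLM
  rw [sum_range_succ'] at hfM
  have hunit : IsUnit (b 0) := by simp [b, IsUnit.pow]
  exact hunit.smul_left_cancel.1 (by simpa using add_left_cancel (hLM.trans hfM.symm))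

end FiniteDifferences

theorem sum_ncard_smul_eq_zero {τ α G : Type*} [Fintype τ] [AddCommMonoid G] {A : τ → Set α}
    {c : τ → G} (hA : ∀ i, (A i).Finite) [∀ x, DecidablePred (x ∈ A ·)]
    (h : ∀ x, ∑ i with x ∈ A i, c i = 0) : ∑ i, (A i).ncard • c i = 0 := by
  classical
  lift A to τ → Finset α using hA
  simp only [Set.ncard_coe_finset, ← sum_const]
  rw [sum_comm' (t' := univ.biUnion A) (s' := fun x => {i | x ∈ A i})
    (by simpa using fun x y hy => ⟨x, hy⟩)]
  exact sum_eq_zero fun x _ => by simpa using h x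

section LatticePoints

variable {n : ℕ}

/-- The coordinatewise inclusion of the integer lattice `ℤ^n` into `ℝ^n`. -/
def latticeInclusion (n : ℕ) : (Fin n → ℤ) →+ (Fin n → ℝ) :=
  (Int.castAddHom ℝ).compLeft (Fin n)

theorem latticePointCount_eq_ncard_preimage (S : Set (Fin n → ℝ)) :
    latticePointCount S = (latticeInclusion n ⁻¹' S).ncard :=
  rfl

theorem isometry_latticeInclusion : Isometry (latticeInclusion n) :=
  Isometry.piMap _ fun _ => Real.isometry_intCast

theorem finite_latticeInclusion_preimage {S : Set (Fin n → ℝ)} (hS : Bornology.IsBounded S) :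
    (latticeInclusion n ⁻¹' S).Finite :=
  (Metric.isCompact_of_isClosed_isBounded (isClosed_discrete _)
    (isometry_latticeInclusion.antilipschitz.isBounded_preimage hS)).finite_of_discrete

theorem range_latticeInclusion :
    Set.range (latticeInclusion n) = Submodule.span ℤ (Set.range (Pi.basisFun ℝ (Fin n))) := by
  ext x
  simp only [SetLike.mem_coe, Module.Basis.mem_span_iff_repr_mem]
  simp [funext_iff, latticeInclusion, Classical.skolem]

theorem latticePointCount_preimage_sub (S : Set (Fin n → ℝ)) (w : Fin n → ℤ) :
    latticePointCount ((· - latticeInclusion n w) ⁻¹' S) = latticePointCount S := by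
  have hpre : latticeInclusion n ⁻¹' ((· - latticeInclusion n w) ⁻¹' S) =
      (· - w) ⁻¹' (latticeInclusion n ⁻¹' S) := by
    ext v
    simp
  rw [latticePointCount_eq_ncard_preimage, hpre]
  exact Set.ncard_preimage_of_injective_subset_range (Equiv.subRight w).injective
    ((Equiv.subRight w).range_eq_univ ▸ Set.subset_univ _)

theorem latticePointCount_smul_eq_card {c : ℝ} (hc : c ≠ 0) (S : Set (Fin n → ℝ)) :
    latticePointCount (c • S) = Nat.card
      ↑(S ∩ c⁻¹ • (Submodule.span ℤ (Set.range (Pi.basisFun ℝ (Fin n))) : Set (Fin n → ℝ))) := by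
  rw [← range_latticeInclusion, latticePointCount_eq_ncard_preimage, Nat.card_coe_set_eq,
    ← Set.ncard_image_of_injective _ isometry_latticeInclusion.injective,
    Set.image_preimage_eq_inter_range,
    ← Set.ncard_image_of_injective _ (smul_right_injective (Fin n → ℝ) (inv_ne_zero hc)),
    Set.image_smul, Set.smul_set_inter₀ (inv_ne_zero hc), inv_smul_smul₀ hc]

theorem fwdDiff_iter_latticePointCount_smul_convexHull_eq_zero {ι : Type*} [Fintype ι] [Nonempty ι]
    (w : ι → Fin n → ℤ) : (fwdDiff 1)^[Fintype.card ι] (fun k : ℕ => (latticePointCount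
      ((k : ℝ) • convexHull ℝ (Set.range fun i => latticeInclusion n (w i))) : ℝ)) = 0 := by
  classical
  set P := convexHull ℝ (Set.range fun i => latticeInclusion n (w i)) with hP
  have hbdd : Bornology.IsBounded P := isBounded_convexHull.2 (Set.finite_range _).isBounded
  ext k
  let t : ℝ := k + Fintype.card ι
  let S (I : Finset ι) : Set (Fin n → ℝ) :=
    (· - latticeInclusion n (∑ i ∈ I, w i)) ⁻¹' ((t - #I) • P)
  have hS (I : Finset ι) :
      (latticePointCount (S I) : ℝ) = latticePointCount
        (((k + (Fintype.card ι - #I) : ℕ) : ℝ) • P) := by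
    rw [latticePointCount_preimage_sub, Nat.cast_add, Nat.cast_sub (card_le_univ I), add_sub_assoc]
  have hSfin (I : Finset ι) : (latticeInclusion n ⁻¹' S I).Finite :=
    finite_latticeInclusion_preimage <|
      (IsometryEquiv.subRight _).isometry.antilipschitz.isBounded_preimage (hbdd.smul₀ _)
  have hsum := sum_ncard_smul_eq_zero (c := fun I : Finset ι => (-1 : ℤ) ^ #I) hSfin fun v => by
    simpa [S, hP] using sum_neg_one_pow_card_mem_smul_convexHull_eq_zero
      (u := fun i => latticeInclusion n (w i)) (t := t) (by simp [t]) (latticeInclusion n v)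
  rw [fwdDiff_iter_card_eq_sum_finset]
  simp only [← hS]
  simpa [latticePointCount_eq_ncard_preimage, mul_comm] using congrArg (Int.cast : ℤ → ℝ) hsum

variable {P : Set (Fin n → ℝ)} {L : ℝ[X]}

theorem IsLatticePolytope.isCompact (hP : IsLatticePolytope P) : IsCompact P := by
  obtain ⟨V, rfl⟩ := hP
  exact (V.finite_toSet.image _).isCompact_convexHull ℝ

theorem IsLatticePolytope.convex (hP : IsLatticePolytope P) : Convex ℝ P := by
  obtain ⟨V, rfl⟩ := hP
  exact convex_convexHull ℝ _

theorem latticePointCount_zero_smul (hne : P.Nonempty) : latticePointCount ((0 : ℝ) • P) = 1 := by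
  rw [Set.zero_smul_set hne, latticePointCount_eq_ncard_preimage, ← Set.singleton_zero,
    ← map_zero (latticeInclusion n), ← Set.image_singleton,
    isometry_latticeInclusion.injective.preimage_image, Set.ncard_singleton]

theorem IsEhrhartPoly.eval_zero (hL : IsEhrhartPoly P L) (hP : IsLatticePolytope P)
    (hne : P.Nonempty) : L.eval 0 = 1 := by
  obtain ⟨V, hV⟩ := hP
  have hPV : P = convexHull ℝ (Set.range fun v : V => latticeInclusion n v) := by
    rw [hV, Set.image_eq_range]
    rfl
  have : Nonempty V := by
    rwa [hPV, convexHull_nonempty_iff, Set.range_nonempty_iff_nonempty] at hne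
  have hfwdDiff := fwdDiff_iter_latticePointCount_smul_convexHull_eq_zero
    (Subtype.val : V → Fin n → ℤ)
  rw [← hPV] at hfwdDiff
  simpa [latticePointCount_zero_smul hne] using eval_zero_eq_of_fwdDiff_iter_eq_zero hfwdDiff hL

theorem IsEhrhartPoly.volume_eq_leadingCoeff (hL : IsEhrhartPoly P L)
    (hbdd : Bornology.IsBounded P) (hmeas : MeasurableSet P) (hfrontier : volume (frontier P) = 0)
    (hdeg : L.degree = n) : (volume P).toReal = L.leadingCoeff := by
  have hcount := tendsto_card_div_pow_atTop_volume P hbdd hmeas hfrontier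
  have heval : Tendsto (fun k : ℕ => L.eval (k : ℝ) / (k : ℝ) ^ n) atTop (𝓝 L.leadingCoeff) := by
    simpa [Function.comp_def] using (div_tendsto_atTop_leadingCoeff_div_of_degree_eq L
      (X ^ n : ℝ[X]) (by rw [hdeg, degree_X_pow])).comp tendsto_natCast_atTop_atTop
  refine tendsto_nhds_unique hcount (heval.congr' ?_)
  filter_upwards [eventually_gt_atTop 0] with k hk
  rw [hL k hk, latticePointCount_smul_eq_card (Nat.cast_ne_zero.2 hk.ne'), Fintype.card_fin]

end LatticePoints

section MultisetProd

variable {R : Type*} [CommSemiring R] [LinearOrder R] [IsStrictOrderedRing R] {s : Multiset R}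
  {r : R}

theorem pow_card_le_multiset_prod (hr : 0 ≤ r) (hs : ∀ x ∈ s, r ≤ x) : r ^ s.card ≤ s.prod := by
  simpa using Multiset.prod_map_le_prod_map₀ (fun _ => r) id (fun _ _ => hr) hs

theorem multiset_prod_eq_pow_card_iff (hr : 0 < r) (hs : ∀ x ∈ s, r ≤ x) :
    s.prod = r ^ s.card ↔ s = Multiset.replicate s.card r := by
  refine ⟨fun h => Multiset.eq_replicate_card.2 ?_, fun h => h ▸ by simp⟩
  by_contra! hne
  obtain ⟨x, hx, hxr⟩ := hne
  have hrx : r < x := (hs x hx).lt_of_ne' hxr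
  obtain ⟨t, rfl⟩ := Multiset.exists_cons_of_mem hx
  rw [Multiset.forall_mem_cons] at hs
  refine h.not_gt ?_
  calc r ^ (x ::ₘ t).card = r * r ^ t.card := by rw [Multiset.card_cons, pow_succ']
    _ ≤ r * t.prod := mul_le_mul_of_nonneg_left (pow_card_le_multiset_prod hr.le hs.2) hr.le
    _ < x * t.prod :=
      mul_lt_mul_of_pos_right hrx (Multiset.prod_pos fun y hy => hr.trans_le (hs.2 y hy))
    _ = (x ::ₘ t).prod := (Multiset.prod_cons x t).symm

end MultisetProd

section ComplexRoots

variable {p : ℂ[X]} {ρ : ℝ} {w : ℂ}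

theorem norm_eval_eq_mul_prod_roots (p : ℂ[X]) (w : ℂ) :
    ‖p.eval w‖ = ‖p.leadingCoeff‖ * (p.roots.map fun z => ‖w - z‖).prod := by
  rw [(IsAlgClosed.splits p).eval_eq_prod_roots, norm_mul]
  congr 1
  simpa using map_multiset_prod (normHom (α := ℂ)) (p.roots.map (w - ·))

theorem sub_le_norm_sub_of_re_le {z : ℂ} (hz : z.re ≤ ρ) : w.re - ρ ≤ ‖w - z‖ :=
  (sub_le_sub_left hz _).trans (Complex.re_le_norm (w - z))

theorem eq_of_norm_sub_eq {z : ℂ} (hz : z.re ≤ ρ) (h : ‖w - z‖ = w.re - ρ) : z = ⟨ρ, w.im⟩ := by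
  have hle : w.re - z.re ≤ w.re - ρ := h ▸ Complex.re_le_norm (w - z)
  have hre : z.re = ρ := by linarith
  have him : (w - z).im = 0 := by
    rw [← Complex.abs_re_eq_norm, Complex.sub_re, hre, h, abs_of_nonneg (h ▸ norm_nonneg _)]
  exact Complex.ext hre (sub_eq_zero.1 him).symm

theorem norm_leadingCoeff_mul_pow_le_norm_eval (hroots : ∀ z ∈ p.roots, z.re ≤ ρ)
    (hw : ρ ≤ w.re) : ‖p.leadingCoeff‖ * (w.re - ρ) ^ p.natDegree ≤ ‖p.eval w‖ := by
  rw [norm_eval_eq_mul_prod_roots, (IsAlgClosed.splits p).natDegree_eq_card_roots,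
    ← Multiset.card_map (fun z => ‖w - z‖) p.roots]
  gcongr
  exact pow_card_le_multiset_prod (sub_nonneg.2 hw) <|
    Multiset.forall_mem_map_iff.2 fun z hz => sub_le_norm_sub_of_re_le (hroots z hz)

theorem norm_eval_eq_norm_leadingCoeff_mul_pow_iff (hroots : ∀ z ∈ p.roots, z.re ≤ ρ)
    (hw : ρ < w.re) :
    ‖p.eval w‖ = ‖p.leadingCoeff‖ * (w.re - ρ) ^ p.natDegree ↔
      p = C p.leadingCoeff * (X - C ⟨ρ, w.im⟩) ^ p.natDegree := by
  constructor
  · intro h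
    obtain rfl | hp := eq_or_ne p 0
    · simp
    have hcard := (IsAlgClosed.splits p).natDegree_eq_card_roots
    rw [norm_eval_eq_mul_prod_roots, mul_right_inj' (by simpa using hp), hcard,
      ← Multiset.card_map (fun z => ‖w - z‖) p.roots, multiset_prod_eq_pow_card_iff (sub_pos.2 hw)
      (Multiset.forall_mem_map_iff.2 fun z hz => sub_le_norm_sub_of_re_le (hroots z hz)),
      Multiset.eq_replicate_card, Multiset.forall_mem_map_iff] at h
    have hreplicate : p.roots = Multiset.replicate p.natDegree ⟨ρ, w.im⟩ :=
      Multiset.eq_replicate.2 ⟨hcard.symm, fun z hz => eq_of_norm_sub_eq (hroots z hz) (h z hz)⟩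
    conv_lhs => rw [(IsAlgClosed.splits p).eq_prod_roots, hreplicate, Multiset.map_replicate,
      Multiset.prod_replicate]
  · intro h
    have hdist : ‖w - ⟨ρ, w.im⟩‖ = w.re - ρ := by
      rw [← abs_of_pos (sub_pos.2 hw), ← Complex.sub_re w ⟨ρ, w.im⟩, eq_comm,
        Complex.abs_re_eq_norm, Complex.sub_im, sub_self]
    conv_lhs => rw [h]
    simp [hdist]

end ComplexRoots

section RealPolynomials

variable {L : ℝ[X]} {ρ x : ℝ}

theorem norm_eval_map_algebraMap_ofReal (L : ℝ[X]) (x : ℝ) :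
    ‖(L.map (algebraMap ℝ ℂ)).eval (x : ℂ)‖ = |L.eval x| := by
  rw [← Complex.coe_algebraMap, eval_map_apply, norm_algebraMap', Real.norm_eq_abs]

theorem abs_leadingCoeff_mul_pow_le_abs_eval
    (hroots : ∀ z ∈ (L.map (algebraMap ℝ ℂ)).roots, z.re ≤ ρ) (hx : ρ ≤ x) :
    |L.leadingCoeff| * (x - ρ) ^ L.natDegree ≤ |L.eval x| := by
  simpa [-eval_map_algebraMap, norm_eval_map_algebraMap_ofReal] using
    norm_leadingCoeff_mul_pow_le_norm_eval (w := (x : ℂ)) hroots hx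

theorem abs_eval_eq_abs_leadingCoeff_mul_pow_iff
    (hroots : ∀ z ∈ (L.map (algebraMap ℝ ℂ)).roots, z.re ≤ ρ) (hx : ρ < x) :
    |L.eval x| = |L.leadingCoeff| * (x - ρ) ^ L.natDegree ↔
      L = C L.leadingCoeff * (X - C ρ) ^ L.natDegree := by
  rw [← (map_injective (algebraMap ℝ ℂ) (algebraMap ℝ ℂ).injective).eq_iff]
  simpa [-eval_map_algebraMap, norm_eval_map_algebraMap_ofReal, ← Complex.ofReal_def] using
    norm_eval_eq_norm_leadingCoeff_mul_pow_iff (w := (x : ℂ)) hroots hx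

end RealPolynomials

theorem eq_C_mul_X_sub_C_pow_iff {K : Type*} [Field K] {a : K} (ha : a ≠ 0) {L : K[X]} {n : ℕ}
    (h0 : L.eval 0 = 1) :
    L = C L.leadingCoeff * (X - C (-1 / a)) ^ n ↔ L = (C a * X + 1) ^ n := by
  have hfactor : (C a * X + 1 : K[X]) ^ n = C (a ^ n) * (X - C (-1 / a)) ^ n := by
    rw [C_pow, ← mul_pow, mul_sub, ← C_mul, mul_div_cancel₀ _ ha, C_neg, C_1, sub_neg_eq_add]
  rw [hfactor]
  constructor
  · intro h
    have hlead : L.leadingCoeff = a ^ n := by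
      rw [h] at h0
      simpa [neg_div, mul_inv_eq_one₀ (pow_ne_zero n ha)] using h0
    rwa [hlead] at h
  · intro h
    have hlead : L.leadingCoeff = a ^ n := by
      rw [h, leadingCoeff_mul_monic ((monic_X_sub_C _).pow n), leadingCoeff_C]
    rwa [hlead]

theorem forall_eval_natCast_eq_iff {R : Type*} [CommRing R] [IsDomain R] [CharZero R]
    {p q : R[X]} : (∀ k : ℕ, 0 < k → p.eval (k : R) = q.eval (k : R)) ↔ p = q := by
  refine ⟨fun h => eq_of_infinite_eval_eq p q ?_, fun h k _ => h ▸ rfl⟩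
  refine ((Set.Ioi_infinite 0).image Nat.cast_injective.injOn).mono ?_
  rintro _ ⟨k, hk, rfl⟩
  exact h k hk

theorem volume_le_of_roots_real_part_general (n : ℕ) (a : ℝ) (ha : 0 < a) (P : Set (Fin n → ℝ))
    (hP : IsLatticePolytope P) (hne : P.Nonempty)
    (L : Polynomial ℝ) (hL : IsEhrhartPoly P L) (hdeg : L.natDegree = n)
    (hroots : ∀ z ∈ (L.map (algebraMap ℝ ℂ)).roots, z.re ≤ -1 / a) :
    (volume P).toReal ≤ (a / (a + 1)) ^ n * (latticePointCount P : ℝ) ∧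
    ((volume P).toReal = (a / (a + 1)) ^ n * (latticePointCount P : ℝ) ↔
      ∀ k : ℕ, 0 < k → L.eval (k : ℝ) = (a * k + 1) ^ n) := by
  have h0 : L.eval 0 = 1 := hL.eval_zero hP hne
  have hdegree : L.degree = n :=
    hdeg ▸ degree_eq_natDegree fun h => by simp [h] at h0
  have hvol := hL.volume_eq_leadingCoeff hP.isCompact.isBounded hP.isCompact.measurableSet
    (hP.convex.addHaar_frontier volume) hdegree
  have hcount : L.eval 1 = latticePointCount P := by simpa using hL 1 one_pos
  have hone : -1 / a < 1 := (div_neg_of_neg_of_pos (by norm_num) ha).trans one_pos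
  have hratio : (a / (a + 1)) ^ n = ((1 - -1 / a) ^ n)⁻¹ := by
    rw [← inv_pow, neg_div, sub_neg_eq_add, one_add_div ha.ne', inv_div]
  have hpos : 0 < (1 - -1 / a) ^ n := pow_pos (sub_pos.2 hone) n
  have hlead : 0 ≤ L.leadingCoeff := hvol ▸ ENNReal.toReal_nonneg
  have hle := abs_leadingCoeff_mul_pow_le_abs_eval hroots hone.le
  have hiff := abs_eval_eq_abs_leadingCoeff_mul_pow_iff hroots hone
  rw [hdeg, hcount, abs_of_nonneg hlead, Nat.abs_cast] at hle hiff
  rw [hvol, hratio, le_inv_mul_iff₀ hpos, eq_inv_mul_iff_mul_eq₀ hpos.ne', mul_comm, eq_comm, hiff,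
    eq_C_mul_X_sub_C_pow_iff ha.ne' h0, ← forall_eval_natCast_eq_iff]
  exact ⟨hle, by simp⟩

theorem volume_le_of_roots_real_part (n : ℕ) (a : ℝ) (ha : 0 < a) (P : Set (Fin n → ℝ))
    (hP : IsLatticePolytope P) (hfull : (interior P).Nonempty)
    (L : Polynomial ℝ) (hL : IsEhrhartPoly P L) (hdeg : L.natDegree = n)
    (hroots : ∀ z ∈ (L.map (algebraMap ℝ ℂ)).roots, z.re = -1 / a) :
    (volume P).toReal ≤ (a / (a + 1)) ^ n * (latticePointCount P : ℝ) ∧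
    ((volume P).toReal = (a / (a + 1)) ^ n * (latticePointCount P : ℝ) ↔
      ∀ k : ℕ, 0 < k → L.eval (k : ℝ) = (a * k + 1) ^ n) :=
  volume_le_of_roots_real_part_general n a ha P hP (hfull.mono interior_subset) L hL hdeg
    fun z hz => (hroots z hz).le
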